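/- Let ψ : ℝ^n → ℝ be μ-strongly convex (μ > 0) and f_1, …, f_m : ℝ^n → ℝ convex and differentiable with L_i-Lipschitz gradients; L_max = max_i L_i. Fix K ≥ 1, subsets J_0, …, J_{K−1} ⊆ {1,…,m}, weights w_{i,k} > 0 with ∑_{i∈J_k} w_{i,k} = 1, and lower bounds l_{J_k}* ≤ inf_{x} ∑_{i∈J_k} w_{i,k} f_i(x). Let {λ_k} be a nonincreasing sequence with 0 < λ_k ≤ 1, λ_{-1} = λ_0, t_{-1} = γ_b > 0, and generate (x_k, x_k*) for k = 0, …, K by x_{k+1}* = x_k* − t_k·∑_{i∈J_k} w_{i,k}∇f_i(x_k), x_{k+1} = ∇ψ*(x_{k+1}*), starting from x_0 ∈ ℝ^n, x_0* ∈ ∂ψ(x_0), where t_k is the DecmSPS stepsize t_k = λ_k·min{ μ·(∑_{i∈J_k} w_{i,k}(f_i(x_k) − l_{J_k}*)) / ‖∑_{i∈J_k} w_{i,k}∇f_i(x_k)‖² , t_{k−1}/λ_{k−1} } (first argument +∞ if the gradient sum is 0). Fix x̂ ∈ ℝ^n, let D = max_{0≤k≤K−1} D_ψ^{x_k*}(x_k,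 x̂) and L̃ = min{μ/(2 L_max), γ_b/λ_0}. Then ∑_{k=0}^{K−1} ∑_{i∈J_k} w_{i,k}(f_i(x_k) − f_i(x̂)) ≤ 2D/(λ_{K−1}·L̃) + ∑_{k=0}^{K−1} λ_k·∑_{i∈J_k} w_{i,k}(f_i(x̂) − l_{J_k}*). -/

import Mathlib

/-!
Along the iteration every `xst k` is a subgradient of `ψ` at `x k`, because the gradient of the
conjugate at `p` is the maximizer of `⟪p, ·⟫ - ψ` (`isSubgrad_gradient_fenchel`). Write `F k` for the
weighted sum of the `f i`, `D k` for the Bregman distance from `x k` to `xhat`,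
`a k = F k (x k) - F k xhat` and `b k = F k xhat - l k ≥ 0`. Strong convexity of `ψ`, convexity of
`F k` and the stepsize bound `t k * ‖∇F k (x k)‖² ≤ lam k * μ * (F k (x k) - l k)` give
`t k * ((1 - lam k / 2) * a k - lam k / 2 * b k) ≤ D k - D (k + 1)`.

The terms `a k` may be negative, so the factor `1 - lam k / 2` cannot be bounded termwise by `1 / 2`.
Instead one divides by `t k * (1 - lam k / 2)`. This product is nonincreasing in `k`: the ratio
`s k = t k / lam k` is nonincreasing by definition of the stepsize, and `u ↦ u * (1 - u / 2)` is
increasing on `[0, 1]`. Summation by parts (`sum_sub_mul_le`) then bounds the weighted sum of the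
`D k - D (k + 1)` by the maximum of the `D k` times the last weight, which is at most
`2 / t (K - 1)`. Finally `t k ≥ lam k * L̃`, by the descent lemma
`‖∇F k‖² ≤ 2 * Lmax * (F k - l k)`.
-/

open MeasureTheory ProbabilityTheory RealInnerProductSpace
open scoped BigOperators

noncomputable section

/-- `xs` is a subgradient of `ψ` at `x`: `ψ(y) ≥ ψ(x) + ⟨xs, y - x⟩` for all `y`. -/
def IsSubgrad {n : ℕ} (ψ : EuclideanSpace ℝ (Fin n) → ℝ) (x xs : EuclideanSpace ℝ (Fin n)) : Prop :=
  ∀ y, ψ x + ⟪xs, y - x⟫ ≤ ψ y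

/-- Bregman distance `D_ψ^{xs}(x, y) = ψ(y) - ψ(x) - ⟨xs, y - x⟩`. -/
def Breg {n : ℕ} (ψ : EuclideanSpace ℝ (Fin n) → ℝ) (x xs y : EuclideanSpace ℝ (Fin n)) : ℝ :=
  ψ y - ψ x - ⟪xs, y - x⟫

/-- `ψ` is `α`-strongly convex:
`ψ(y) ≥ ψ(x) + ⟨xs, y - x⟩ + (α/2)‖y - x‖²` for all `x, y` and all subgradients `xs ∈ ∂ψ(x)`. -/
def SubgradStrongConvex {n : ℕ} (ψ : EuclideanSpace ℝ (Fin n) → ℝ) (α : ℝ) : Prop :=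
  ∀ x y xs, IsSubgrad ψ x xs → ψ x + ⟪xs, y - x⟫ + α / 2 * ‖y - x‖ ^ 2 ≤ ψ y

/-- Fenchel conjugate `ψ*(p) = sup_z (⟨p, z⟩ - ψ(z))`. -/
def fenchel {n : ℕ} (ψ : EuclideanSpace ℝ (Fin n) → ℝ) (p : EuclideanSpace ℝ (Fin n)) : ℝ :=
  ⨆ z, (⟪p, z⟫ - ψ z)

/-- `xhat` is the Bregman projection of `x` onto `C` w.r.t. `ψ` and the subgradient `xs`:
it belongs to `C` and minimizes `y ↦ D_ψ^{xs}(x, y)` over `C`. -/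
def IsBregProj {n : ℕ} (ψ : EuclideanSpace ℝ (Fin n) → ℝ) (x xs : EuclideanSpace ℝ (Fin n))
    (C : Set (EuclideanSpace ℝ (Fin n))) (xhat : EuclideanSpace ℝ (Fin n)) : Prop :=
  xhat ∈ C ∧ ∀ y ∈ C, Breg ψ x xs xhat ≤ Breg ψ x xs y

/-- The proximity objective `F(x) = (1/m) ∑_{i=1}^m f_i(x)`. -/
def Fobj {n m : ℕ} (f : Fin m → EuclideanSpace ℝ (Fin n) → ℝ) (v : EuclideanSpace ℝ (Fin n)) : ℝ :=
  (m : ℝ)⁻¹ * ∑ i, f i v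

/-- The set of (global) minimizers of `F = (1/m) ∑ f_i`. -/
def ArgminSet {n m : ℕ} (f : Fin m → EuclideanSpace ℝ (Fin n) → ℝ) :
    Set (EuclideanSpace ℝ (Fin n)) :=
  {z | ∀ y, Fobj f z ≤ Fobj f y}

/-- Squared Bregman distance from `z` (with subgradient `zs`) to a set `X`:
`inf_{w ∈ X} D_ψ^{zs}(z, w)`. -/
def distSq {n : ℕ} (ψ : EuclideanSpace ℝ (Fin n) → ℝ) (z zs : EuclideanSpace ℝ (Fin n))
    (X : Set (EuclideanSpace ℝ (Fin n))) : ℝ :=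
  ⨅ w : X, Breg ψ z zs (w : EuclideanSpace ℝ (Fin n))

/-! ### Convex functions with Lipschitz gradient -/

section Smooth

variable {E : Type*} [NormedAddCommGroup E] [InnerProductSpace ℝ E] [CompleteSpace E]

lemma hasDerivAt_along_line {f : E → ℝ} {f' : E → E} (hf : ∀ z, HasGradientAt f (f' z) z)
    (x d : E) (s : ℝ) :
    HasDerivAt (fun s : ℝ => f (x + s • d)) (inner ℝ (f' (x + s • d)) d) s := by
  have h1 : HasDerivAt (fun s : ℝ => x + s • d) d s := by
    simpa using ((hasDerivAt_id s).smul_const d).const_add x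
  have h2 := (hf (x + s • d)).hasFDerivAt.comp_hasDerivAt s h1
  exact h2.congr_deriv (by simp)

lemma gradient_inequality {f : E → ℝ} {f' : E → E} (hc : ConvexOn ℝ Set.univ f)
    (hf : ∀ z, HasGradientAt f (f' z) z) (x y : E) :
    f x + inner ℝ (f' x) (y - x) ≤ f y := by
  have hcl : ConvexOn ℝ Set.univ (fun s : ℝ => f (x + s • (y - x))) := by
    have := hc.comp_affineMap (AffineMap.lineMap x y : ℝ →ᵃ[ℝ] E)
    rw [Set.preimage_univ] at this
    have he : f ∘ (AffineMap.lineMap x y : ℝ →ᵃ[ℝ] E) = fun s : ℝ => f (x + s • (y - x)) := by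
      funext s
      simp [AffineMap.lineMap_apply, add_comm]
    rwa [he] at this
  have hd := hasDerivAt_along_line hf x (y - x) 0
  have := hcl.le_slope_of_hasDerivAt (Set.mem_univ 0) (Set.mem_univ 1) one_pos hd
  simp [slope_def_field] at this
  linarith

/-- The descent lemma for functions with Lipschitz gradient. -/
lemma descent {f : E → ℝ} {f' : E → E} {L : ℝ}
    (hf : ∀ z, HasGradientAt f (f' z) z) (hL : ∀ z w, ‖f' z - f' w‖ ≤ L * ‖z - w‖) (x y : E) :
    f y ≤ f x + inner ℝ (f' x) (y - x) + L / 2 * ‖y - x‖ ^ 2 := by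
  set d := y - x with hd
  have hder : ∀ s : ℝ, HasDerivAt
      (fun s : ℝ => f (x + s • d) - s * inner ℝ (f' x) d - L / 2 * ‖d‖ ^ 2 * s ^ 2)
      (inner ℝ (f' (x + s • d)) d - inner ℝ (f' x) d - L * ‖d‖ ^ 2 * s) s := by
    intro s
    have h1 := hasDerivAt_along_line hf x d s
    have h2 := (hasDerivAt_id s).mul_const (inner ℝ (f' x) d)
    have h3 := (hasDerivAt_pow 2 s).const_mul (L / 2 * ‖d‖ ^ 2)
    refine ((h1.sub h2).sub h3).congr_deriv ?_
    simp
    ring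
  have hanti := antitoneOn_of_deriv_nonpos (convex_Icc (0 : ℝ) 1)
    (fun s _ => (hder s).continuousAt.continuousWithinAt)
    (fun s _ => (hder s).differentiableAt.differentiableWithinAt) (by
      intro s hs
      rw [interior_Icc] at hs
      rw [(hder s).deriv, ← inner_sub_left]
      have h1 := real_inner_le_norm (f' (x + s • d) - f' x) d
      have h2 := hL (x + s • d) x
      rw [add_sub_cancel_left, norm_smul, Real.norm_of_nonneg hs.1.le] at h2
      nlinarith [mul_le_mul_of_nonneg_right h2 (norm_nonneg d)])
  have := hanti (Set.left_mem_Icc.2 zero_le_one) (Set.right_mem_Icc.2 zero_le_one) zero_le_one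
  simp [hd] at this
  linarith

end Smooth

/-! ### The conjugate of a strongly convex function -/

/-- A strongly convex function with a subgradient somewhere grows quadratically, so
`ψ - ⟪p, ·⟫` attains its minimum for every `p`. -/
lemma exists_isSubgrad {n : ℕ} {ψ : EuclideanSpace ℝ (Fin n) → ℝ} {μ : ℝ} (hμ : 0 < μ)
    (hψ : ConvexOn ℝ Set.univ ψ) (hsc : SubgradStrongConvex ψ μ)
    {x₀ p₀ : EuclideanSpace ℝ (Fin n)} (h₀ : IsSubgrad ψ x₀ p₀) (p : EuclideanSpace ℝ (Fin n)) :
    ∃ z, IsSubgrad ψ z p := by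
  have hcont : Continuous ψ := hψ.locallyLipschitz.continuous
  have hc2 : Continuous (fun z => ψ z - ⟪p, z⟫) := by fun_prop
  -- Outside the ball of radius `2 ‖p - p₀‖ / μ` around `x₀` the value exceeds the one at `x₀`.
  obtain ⟨z, hz⟩ := hc2.exists_forall_le' x₀ (by
    have hcomp := (isCompact_closedBall x₀ (2 * ‖p - p₀‖ / μ)).compl_mem_cocompact
    filter_upwards [hcomp] with y hy
    have hy' : 2 * ‖p - p₀‖ / μ < ‖y - x₀‖ := by
      simpa [dist_eq_norm] using hy
    rw [div_lt_iff₀ hμ] at hy'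
    have h1 := hsc x₀ y p₀ h₀
    have h2 := real_inner_le_norm (p - p₀) (y - x₀)
    rw [inner_sub_left] at h2
    have h3 : ⟪p, y - x₀⟫ = ⟪p, y⟫ - ⟪p, x₀⟫ := inner_sub_right ..
    nlinarith [norm_nonneg (y - x₀)])
  refine ⟨z, fun y => ?_⟩
  have := hz y
  rw [inner_sub_right]
  linarith

/-- Young's inequality with weight `μ`. -/
lemma inner_le_young {E : Type*} [NormedAddCommGroup E] [InnerProductSpace ℝ E] {μ : ℝ}
    (hμ : 0 < μ) (u v : E) :
    inner ℝ u v ≤ ‖u‖ ^ 2 / (2 * μ) + μ / 2 * ‖v‖ ^ 2 := by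
  have h1 := real_inner_le_norm u v
  have h2 : ‖u‖ ^ 2 / (2 * μ) + μ / 2 * ‖v‖ ^ 2 - ‖u‖ * ‖v‖
      = (‖u‖ - μ * ‖v‖) ^ 2 / (2 * μ) := by
    field_simp
    ring
  have h3 : 0 ≤ (‖u‖ - μ * ‖v‖) ^ 2 / (2 * μ) := by positivity
  linarith

/-- If `p ∈ ∂ψ(z)`, then
`0 ≤ ψ*(q) - ψ*(p) - ⟪q - p, z⟫ ≤ ‖q - p‖² / (2μ)`, whence `z` is the gradient of `ψ*` at `p`. -/
lemma hasGradientAt_fenchel {n : ℕ} {ψ : EuclideanSpace ℝ (Fin n) → ℝ} {μ : ℝ} (hμ : 0 < μ)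
    (hsc : SubgradStrongConvex ψ μ) {z p : EuclideanSpace ℝ (Fin n)} (h : IsSubgrad ψ z p) :
    HasGradientAt (fenchel ψ) z p := by
  have hup : ∀ q y, ⟪q, y⟫ - ψ y ≤ ⟪p, z⟫ - ψ z + ⟪q - p, z⟫ + ‖q - p‖ ^ 2 / (2 * μ) := by
    intro q y
    have h1 := hsc z y p h
    have h2 := inner_le_young hμ (q - p) (y - z)
    simp only [inner_sub_left, inner_sub_right] at h1 h2 ⊢
    linarith
  have hle : ∀ q, fenchel ψ q ≤ ⟪p, z⟫ - ψ z + ⟪q - p, z⟫ + ‖q - p‖ ^ 2 / (2 * μ) :=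
    fun q => ciSup_le (hup q)
  have hge : ∀ q, ⟪q, z⟫ - ψ z ≤ fenchel ψ q := fun q =>
    le_ciSup (f := fun z => ⟪q, z⟫ - ψ z) ⟨_, by rintro _ ⟨y, rfl⟩; exact hup q y⟩ z
  have hp : fenchel ψ p = ⟪p, z⟫ - ψ z := le_antisymm (by simpa using hle p) (hge p)
  rw [hasGradientAt_iff_isLittleO]
  refine Asymptotics.IsBigO.trans_isLittleO (g := fun q => ‖q - p‖ ^ 2)
    (Asymptotics.IsBigO.of_bound (1 / (2 * μ)) (Filter.Eventually.of_forall fun q => ?_)) ?_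
  · have h1 := hle q
    have h2 := hge q
    rw [hp, real_inner_comm (q - p) z, Real.norm_eq_abs, abs_le, Real.norm_of_nonneg (by positivity)]
    have h3 : 1 / (2 * μ) * ‖q - p‖ ^ 2 = ‖q - p‖ ^ 2 / (2 * μ) := by ring
    have h4 : 0 ≤ ‖q - p‖ ^ 2 / (2 * μ) := by positivity
    rw [h3]
    rw [inner_sub_left] at h1 ⊢
    constructor <;> linarith
  · exact Asymptotics.isLittleO_pow_sub_sub p (by norm_num)

lemma isSubgrad_gradient_fenchel {n : ℕ} {ψ : EuclideanSpace ℝ (Fin n) → ℝ} {μ : ℝ} (hμ : 0 < μ)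
    (hψ : ConvexOn ℝ Set.univ ψ) (hsc : SubgradStrongConvex ψ μ)
    {x₀ p₀ : EuclideanSpace ℝ (Fin n)} (h₀ : IsSubgrad ψ x₀ p₀) (p : EuclideanSpace ℝ (Fin n)) :
    IsSubgrad ψ (gradient (fenchel ψ) p) p := by
  obtain ⟨z, hz⟩ := exists_isSubgrad hμ hψ hsc h₀ p
  rwa [(hasGradientAt_fenchel hμ hsc hz).gradient]

/-! ### The one-step estimate and its summation -/

/-- One mirror-descent step with dual displacement `-t g`. -/
lemma breg_step {n : ℕ} {ψ : EuclideanSpace ℝ (Fin n) → ℝ} {μ : ℝ} (hμ : 0 < μ)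
    (hsc : SubgradStrongConvex ψ μ) {x p x' g y : EuclideanSpace ℝ (Fin n)} {t : ℝ}
    (h : IsSubgrad ψ x p) :
    Breg ψ x' (p - t • g) y ≤ Breg ψ x p y + t * ⟪g, y - x⟫ + t ^ 2 * ‖g‖ ^ 2 / (2 * μ) := by
  have h1 := hsc x x' p h
  have h2 := inner_le_young hμ (t • g) (x - x')
  rw [norm_smul, mul_pow, Real.norm_eq_abs, sq_abs, norm_sub_rev] at h2
  unfold Breg
  simp only [inner_sub_left, inner_sub_right, real_inner_smul_left] at h1 h2 ⊢
  linarith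

/-- Summation by parts against nondecreasing weights `p`. -/
lemma sum_sub_mul_le {D p : ℕ → ℝ} {M : ℝ} (hp : ∀ k, 0 ≤ p k) (hmono : ∀ k, p k ≤ p (k + 1))
    (hD : ∀ k, 0 ≤ D k) (N : ℕ) (hM : ∀ k ≤ N, D k ≤ M) :
    ∑ k ∈ Finset.range (N + 1), (D k - D (k + 1)) * p k ≤ M * p N := by
  suffices h : ∑ k ∈ Finset.range (N + 1), (D k - D (k + 1)) * p k + D (N + 1) * p N ≤ M * p N by
    have := mul_nonneg (hD (N + 1)) (hp N)
    linarith
  induction N with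
  | zero =>
    simp only [zero_add, Finset.sum_range_one]
    nlinarith [hM 0 le_rfl, hp 0]
  | succ N ih =>
    rw [Finset.sum_range_succ]
    have h1 := ih fun k hk => hM k (by omega)
    nlinarith [hM (N + 1) le_rfl, hmono N]

/-- The scalar part of the argument: `s k` stands for `t k / lam k`. -/
lemma sum_le_of_step {D a b s lam : ℕ → ℝ} {M c : ℝ} (hc : 0 < c)
    (hs : ∀ k, c ≤ s k) (hsmono : ∀ k, s (k + 1) ≤ s k)
    (hlampos : ∀ k, 0 < lam k) (hlamle : ∀ k, lam k ≤ 1) (hlammono : ∀ k, lam (k + 1) ≤ lam k)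
    (hb : ∀ k, 0 ≤ b k) (hD : ∀ k, 0 ≤ D k) (N : ℕ) (hM : ∀ k ≤ N, D k ≤ M)
    (hstep : ∀ k, lam k * s k * ((1 - lam k / 2) * a k - lam k / 2 * b k) ≤ D k - D (k + 1)) :
    ∑ k ∈ Finset.range (N + 1), a k ≤
      2 * M / (lam N * c) + ∑ k ∈ Finset.range (N + 1), lam k * b k := by
  have hspos : ∀ k, 0 < s k := fun k => hc.trans_le (hs k)
  have hhalf : ∀ k, 1 / 2 ≤ 1 - lam k / 2 := fun k => by linarith [hlamle k]
  have hqpos : ∀ k, 0 < lam k * (1 - lam k / 2) * s k := fun k =>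
    mul_pos (mul_pos (hlampos k) (by linarith [hhalf k])) (hspos k)
  have hqanti : ∀ k, lam (k + 1) * (1 - lam (k + 1) / 2) * s (k + 1) ≤
      lam k * (1 - lam k / 2) * s k := fun k => by
    have h1 : lam (k + 1) * (1 - lam (k + 1) / 2) ≤ lam k * (1 - lam k / 2) := by
      nlinarith [hlammono k, hlamle k, hlamle (k + 1)]
    exact mul_le_mul h1 (hsmono k) (hspos _).le
      (mul_nonneg (hlampos k).le (by linarith [hhalf k]))
  have hM0 : 0 ≤ M := (hD 0).trans (hM 0 (Nat.zero_le N))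
  have hterm : ∀ k, a k ≤
      (D k - D (k + 1)) * (1 / (lam k * (1 - lam k / 2) * s k)) + lam k * b k := fun k => by
    have h1 : lam k / 2 * b k ≤ (1 - lam k / 2) * (lam k * b k) := by
      nlinarith [mul_nonneg (hlampos k).le (hb k), hhalf k]
    have h2 := mul_le_mul_of_nonneg_left h1 (mul_pos (hlampos k) (hspos k)).le
    rw [← sub_le_iff_le_add, mul_one_div, le_div_iff₀ (hqpos k)]
    linarith [hstep k]
  have htel := sum_sub_mul_le (D := D) (p := fun k => 1 / (lam k * (1 - lam k / 2) * s k))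
    (fun k => (one_div_pos.2 (hqpos k)).le)
    (fun k => one_div_le_one_div_of_le (hqpos (k + 1)) (hqanti k)) hD N hM
  have hlast : M * (1 / (lam N * (1 - lam N / 2) * s N)) ≤ 2 * M / (lam N * c) := by
    have h1 : lam N * c / 2 ≤ lam N * (1 - lam N / 2) * s N := by
      have := mul_le_mul (hhalf N) (hs N) hc.le (by linarith [hhalf N])
      nlinarith [mul_le_mul_of_nonneg_left this (hlampos N).le]
    have h2 := one_div_le_one_div_of_le (half_pos (mul_pos (hlampos N) hc)) h1
    calc _ ≤ M * (1 / (lam N * c / 2)) := mul_le_mul_of_nonneg_left h2 hM0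
      _ = _ := by
        have := (hlampos N).ne'
        field_simp
  calc _ ≤ _ := Finset.sum_le_sum fun k _ => hterm k
    _ = _ := Finset.sum_add_distrib
    _ ≤ _ := by linarith

/-! ### The bound for the iterates -/

/-- the finite-horizon sum bound for the SBBP iterates with DecmSPS stepsizes:
`∑_{k<K} ∑_{i∈J_k} w_{i,k}(f_i(x_k) − f_i(x̂)) ≤
  2D/(λ_{K−1}·L̃) + ∑_{k<K} λ_k·∑_{i∈J_k} w_{i,k}(f_i(x̂) − l_{J_k}*)`,
where `D = max_{0≤k≤K−1} D_ψ^{x_k*}(x_k, x̂)` and `L̃ = min{μ/(2 L_max), γ_b/λ_0}`. -/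
theorem stmt10 {n m : ℕ} (hm : 0 < m)
    (ψ : EuclideanSpace ℝ (Fin n) → ℝ) (μ : ℝ) (hμ : 0 < μ)
    (hψconv : ConvexOn ℝ Set.univ ψ) (hsc : SubgradStrongConvex ψ μ)
    (f : Fin m → EuclideanSpace ℝ (Fin n) → ℝ)
    (hfconv : ∀ i, ConvexOn ℝ Set.univ (f i))
    (f' : Fin m → EuclideanSpace ℝ (Fin n) → EuclideanSpace ℝ (Fin n))
    (hdiff : ∀ i z, HasGradientAt (f i) (f' i z) z)
    (L : Fin m → ℝ) (hL : ∀ i, 0 < L i)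
    (hlip : ∀ i z w, ‖f' i z - f' i w‖ ≤ L i * ‖z - w‖)
    (Lmax : ℝ) (hLmax : Lmax = ⨆ i, L i)
    (K : ℕ) (hK : 1 ≤ K)
    (J : ℕ → Finset (Fin m)) (w : ℕ → Fin m → ℝ)
    (hw : ∀ k, ∀ i ∈ J k, 0 < w k i) (hwsum : ∀ k, ∑ i ∈ J k, w k i = 1)
    (l : ℕ → ℝ) (hl : ∀ k y, l k ≤ ∑ i ∈ J k, w k i * f i y)
    (lam : ℕ → ℝ) (hlampos : ∀ k, 0 < lam k) (hlamle : ∀ k, lam k ≤ 1)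
    (hlammono : ∀ k, lam (k + 1) ≤ lam k)
    (γb : ℝ) (hγb : 0 < γb)
    (x xst : ℕ → EuclideanSpace ℝ (Fin n))
    (hx0s : IsSubgrad ψ (x 0) (xst 0))
    (t : ℕ → ℝ)
    (ht0a : ∑ i ∈ J 0, w 0 i • f' i (x 0) = 0 → t 0 = lam 0 * (γb / lam 0))
    (ht0b : ∑ i ∈ J 0, w 0 i • f' i (x 0) ≠ 0 →
      t 0 = lam 0 * min
        (μ * (∑ i ∈ J 0, w 0 i * (f i (x 0) - l 0)) / ‖∑ i ∈ J 0, w 0 i • f' i (x 0)‖ ^ 2)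
        (γb / lam 0))
    (hta : ∀ k, ∑ i ∈ J (k + 1), w (k + 1) i • f' i (x (k + 1)) = 0 →
      t (k + 1) = lam (k + 1) * (t k / lam k))
    (htb : ∀ k, ∑ i ∈ J (k + 1), w (k + 1) i • f' i (x (k + 1)) ≠ 0 →
      t (k + 1) = lam (k + 1) * min
        (μ * (∑ i ∈ J (k + 1), w (k + 1) i * (f i (x (k + 1)) - l (k + 1))) /
          ‖∑ i ∈ J (k + 1), w (k + 1) i • f' i (x (k + 1))‖ ^ 2)
        (t k / lam k))
    (hupd : ∀ k, xst (k + 1) = xst k - t k • ∑ i ∈ J k, w k i • f' i (x k))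
    (hxupd : ∀ k, x (k + 1) = gradient (fenchel ψ) (xst (k + 1)))
    (xhat : EuclideanSpace ℝ (Fin n)) :
    ∑ k ∈ Finset.range K, ∑ i ∈ J k, w k i * (f i (x k) - f i xhat) ≤
      2 * ((Finset.range K).sup'
          (Finset.nonempty_range_iff.mpr (Nat.one_le_iff_ne_zero.mp hK))
          fun k => Breg ψ (x k) (xst k) xhat) /
        (lam (K - 1) * min (μ / (2 * Lmax)) (γb / lam 0)) +
      ∑ k ∈ Finset.range K, lam k * ∑ i ∈ J k, w k i * (f i xhat - l k) := by
  classical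
  have : Nonempty (Fin m) := ⟨⟨0, hm⟩⟩
  have hLle : ∀ i, L i ≤ Lmax := fun i => hLmax ▸ le_ciSup (Set.finite_range L).bddAbove i
  have hLmaxpos : 0 < Lmax := (hL ⟨0, hm⟩).trans_le (hLle _)
  set F : ℕ → EuclideanSpace ℝ (Fin n) → ℝ := fun k y => ∑ i ∈ J k, w k i * f i y with hF
  set G : ℕ → EuclideanSpace ℝ (Fin n) := fun k => ∑ i ∈ J k, w k i • f' i (x k) with hG
  have hlin : ∀ k y c, ∑ i ∈ J k, w k i * (f i y - c) = F k y - c := fun k y c => by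
    simp only [mul_sub, Finset.sum_sub_distrib, ← Finset.sum_mul, hwsum, one_mul, hF]
  have hdif : ∀ k y z, ∑ i ∈ J k, w k i * (f i y - f i z) = F k y - F k z := fun k y z => by
    simp only [mul_sub, Finset.sum_sub_distrib, hF]
  have hGinner : ∀ k v, ⟪G k, v⟫ = ∑ i ∈ J k, w k i * ⟪f' i (x k), v⟫ := fun k v => by
    simp only [hG, sum_inner, real_inner_smul_left]
  have hFconv : ∀ k y, F k (x k) + ⟪G k, y - x k⟫ ≤ F k y := fun k y => by
    rw [hGinner, ← Finset.sum_add_distrib]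
    refine Finset.sum_le_sum fun i hi => ?_
    rw [← mul_add]
    exact mul_le_mul_of_nonneg_left (gradient_inequality (hfconv i) (hdiff i) _ _) (hw k i hi).le
  have hFdesc : ∀ k y, F k y ≤ F k (x k) + ⟪G k, y - x k⟫ + Lmax / 2 * ‖y - x k‖ ^ 2 := fun k y => by
    have hone : Lmax / 2 * ‖y - x k‖ ^ 2 = ∑ i ∈ J k, w k i * (Lmax / 2 * ‖y - x k‖ ^ 2) := by
      rw [← Finset.sum_mul, hwsum, one_mul]
    rw [hGinner, hone, ← Finset.sum_add_distrib, ← Finset.sum_add_distrib]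
    refine Finset.sum_le_sum fun i hi => ?_
    rw [← mul_add, ← mul_add]
    refine mul_le_mul_of_nonneg_left ((descent (hdiff i) (hlip i) (x k) y).trans ?_) (hw k i hi).le
    have := mul_le_mul_of_nonneg_right (hLle i) (sq_nonneg ‖y - x k‖)
    linarith
  -- The descent lemma at the gradient step `y = x k - G k / Lmax`.
  have hGsq : ∀ k, ‖G k‖ ^ 2 ≤ 2 * Lmax * (F k (x k) - l k) := fun k => by
    have h1 := (hl k _).trans (hFdesc k (x k - (1 / Lmax) • G k))
    rw [sub_sub_cancel_left, inner_neg_right, real_inner_smul_right, real_inner_self_eq_norm_sq,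
      norm_neg, norm_smul, mul_pow, Real.norm_eq_abs, sq_abs] at h1
    have h2 : Lmax / 2 * ((1 / Lmax) ^ 2 * ‖G k‖ ^ 2) - 1 / Lmax * ‖G k‖ ^ 2
        = -(‖G k‖ ^ 2 / (2 * Lmax)) := by
      field_simp
      ring
    have h3 : ‖G k‖ ^ 2 / (2 * Lmax) ≤ F k (x k) - l k := by linarith
    rw [div_le_iff₀ (by positivity)] at h3
    linarith
  have hgap : ∀ k y, 0 ≤ F k y - l k := fun k y => sub_nonneg.2 (hl k y)
  set s : ℕ → ℝ := fun k => t k / lam k with hs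
  have hts : ∀ k, t k = lam k * s k := fun k => by
    have := (hlampos k).ne'
    simp only [hs]
    field_simp
  set Lt : ℝ := min (μ / (2 * Lmax)) (γb / lam 0) with hLt
  have hLtpos : 0 < Lt := lt_min (by positivity) (div_pos hγb (hlampos 0))
  -- The stepsize rule: `r` is the stepsize, `r₀` the ratio of the preceding stepsize to its `lam`.
  have hrule : ∀ k r r₀, (G k = 0 → r = lam k * r₀) →
      (G k ≠ 0 → r = lam k * min (μ * (∑ i ∈ J k, w k i * (f i (x k) - l k)) / ‖G k‖ ^ 2) r₀) →
      Lt ≤ r₀ →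
      Lt ≤ r / lam k ∧ r / lam k ≤ r₀ ∧ r / lam k * ‖G k‖ ^ 2 ≤ μ * (F k (x k) - l k) := by
    intro k r r₀ h0 h1 hr₀
    rw [hlin] at h1
    by_cases hz : G k = 0
    · rw [h0 hz, mul_div_cancel_left₀ _ (hlampos k).ne', hz]
      refine ⟨hr₀, le_rfl, ?_⟩
      simpa using mul_nonneg hμ.le (hgap k (x k))
    · have hn : 0 < ‖G k‖ ^ 2 := by positivity
      rw [h1 hz, mul_div_cancel_left₀ _ (hlampos k).ne']
      refine ⟨le_min ((min_le_left _ _).trans ?_) hr₀, min_le_right _ _, ?_⟩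
      · rw [div_le_div_iff₀ (by positivity) hn]
        nlinarith [mul_le_mul_of_nonneg_left (hGsq k) hμ.le]
      · exact (le_div_iff₀ hn).1 (min_le_left _ _)
  have hsge : ∀ k, Lt ≤ s k := by
    intro k
    induction k with
    | zero => exact (hrule 0 _ _ ht0a ht0b (min_le_right _ _)).1
    | succ k ih => exact (hrule (k + 1) _ _ (hta k) (htb k) ih).1
  have hsmono : ∀ k, s (k + 1) ≤ s k := fun k =>
    (hrule (k + 1) _ _ (hta k) (htb k) (hsge k)).2.1
  have hsG : ∀ k, s k * ‖G k‖ ^ 2 ≤ μ * (F k (x k) - l k) := by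
    rintro (_ | k)
    · exact (hrule 0 _ _ ht0a ht0b (min_le_right _ _)).2.2
    · exact (hrule (k + 1) _ _ (hta k) (htb k) (hsge k)).2.2
  have hsub : ∀ k, IsSubgrad ψ (x k) (xst k) := by
    rintro (_ | k)
    · exact hx0s
    · rw [hxupd k]
      exact isSubgrad_gradient_fenchel hμ hψconv hsc hx0s _
  have hDnn : ∀ k, 0 ≤ Breg ψ (x k) (xst k) xhat := fun k => by
    have := hsub k xhat
    unfold Breg
    linarith
  obtain ⟨N, rfl⟩ : ∃ N, K = N + 1 := ⟨K - 1, by omega⟩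
  simp only [hdif, hlin, Nat.add_sub_cancel]
  refine sum_le_of_step (s := s) (D := fun k => Breg ψ (x k) (xst k) xhat) hLtpos hsge hsmono
    hlampos hlamle hlammono (fun k => hgap k xhat) hDnn N
    (fun k hk => Finset.le_sup' (fun k => Breg ψ (x k) (xst k) xhat)
      (Finset.mem_range.2 (Nat.lt_succ_of_le hk))) fun k => ?_
  have h1 := breg_step hμ hsc (x' := x (k + 1)) (g := G k) (y := xhat) (t := t k) (hsub k)
  rw [show xst k - t k • G k = xst (k + 1) from (hupd k).symm] at h1
  have htpos : 0 < t k := by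
    rw [hts]
    exact mul_pos (hlampos k) (hLtpos.trans_le (hsge k))
  have h2 : t k ^ 2 * ‖G k‖ ^ 2 / (2 * μ) ≤ t k * (lam k / 2) * (F k (x k) - l k) := by
    rw [div_le_iff₀ (by positivity)]
    have := mul_le_mul_of_nonneg_left (hsG k) (mul_pos htpos (hlampos k)).le
    have h3 : t k ^ 2 * ‖G k‖ ^ 2 = t k * lam k * (s k * ‖G k‖ ^ 2) := by
      rw [sq (t k)]
      nth_rewrite 2 [hts k]
      ring
    rw [h3]
    linarith
  have h4 := mul_le_mul_of_nonneg_left (hFconv k xhat) htpos.le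
  rw [← hts k]
  linarith
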